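/- (Local convergence under misspecification: positivity of the radius.) Let g, G, W, θ̂, L, σ̲, R_G be as in the Gauss-Newton local convergence setting: g twice continuously differentiable with Jacobian G Lipschitz with constant L > 0, W with eigenvalues in [λ̲_W, λ̄_W], λ̲_W > 0, G(θ̂)ᵀWg(θ̂) = 0, and σ_min[G(θ)] ≥ σ̲ > 0 on ‖θ − θ̂‖ ≤ R_G. Suppose φ := ‖g(θ̂)‖_W satisfies 0 ≤ φ < σ̲²·λ̲_W/(L·√λ̄_W). Then for every γ ∈ (0,1) there exists γ̃ ∈ (0,γ) such that R̃ := ((γ−γ̃)/γ)·σ̲·√(λ̲_W/λ̄_W)/L − φ/(σ̲·√λ̲_W) > 0, and for any θ_0 with ‖θ_0 − θ̂‖ ≤ min(R̃, R_G), the Gauss-Newton iterates θ_{k+1} = θ_k − γ[G(θ_k)ᵀWG(θ_k)]⁻¹G(θ_k)ᵀWg(θ_k) satisfy ‖θ_{k+1} − θ̂‖ ≤ (1 − γ̃)^{k+1}·‖θ_0 − θ̂‖ for all k ≥ 0. -/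

import Mathlib

open Matrix Set MeasureTheory
open scoped BigOperators

noncomputable section

/-- Euclidean norm of a vector in `Fin n → ℝ`. -/
def enorm' {n : ℕ} (v : Fin n → ℝ) : ℝ := Real.sqrt (∑ i, v i ^ 2)

/-- Smallest singular value of a matrix. -/
def sigMin {m p : ℕ} (A : Matrix (Fin m) (Fin p) ℝ) : ℝ :=
  sInf {c : ℝ | ∃ v : Fin p → ℝ, enorm' v = 1 ∧ c = enorm' (A *ᵥ v)}

/-- Largest singular value of a matrix (operator norm). -/
def sigMax {m p : ℕ} (A : Matrix (Fin m) (Fin p) ℝ) : ℝ :=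
  sSup {c : ℝ | ∃ v : Fin p → ℝ, enorm' v = 1 ∧ c = enorm' (A *ᵥ v)}

/-- Smallest eigenvalue of a (symmetric) square matrix, via the Rayleigh quotient. -/
def lamMin {n : ℕ} (A : Matrix (Fin n) (Fin n) ℝ) : ℝ :=
  sInf {c : ℝ | ∃ v : Fin n → ℝ, enorm' v = 1 ∧ c = v ⬝ᵥ (A *ᵥ v)}

/-- Largest eigenvalue of a (symmetric) square matrix, via the Rayleigh quotient. -/
def lamMax {n : ℕ} (A : Matrix (Fin n) (Fin n) ℝ) : ℝ :=
  sSup {c : ℝ | ∃ v : Fin n → ℝ, enorm' v = 1 ∧ c = v ⬝ᵥ (A *ᵥ v)}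

/-- Weighted norm `‖v‖_W = √(vᵀ W v)`. -/
def wnorm {m : ℕ} (W : Matrix (Fin m) (Fin m) ℝ) (v : Fin m → ℝ) : ℝ :=
  Real.sqrt (v ⬝ᵥ (W *ᵥ v))

/-- A matrix viewed as a continuous linear map `ℝ^p → ℝ^m`. -/
def toCLM {m p : ℕ} (A : Matrix (Fin m) (Fin p) ℝ) : (Fin p → ℝ) →L[ℝ] (Fin m → ℝ) :=
  LinearMap.toContinuousLinearMap A.mulVecLin

/-!
Factor `W = Bᵀ B`. Replacing `g` by `B g` and `G` by `B G` turns the `W`-norm into the Euclidean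
norm and leaves the iteration unchanged, so it suffices to treat `W = 1` with the Lipschitz
constant `Λ = L √Whi` and the lower bound `s = σlo √Wlo` for the Jacobian `J`.

Write `e = θ - θhat`. The Gauss-Newton direction `d` at `θ` is the least squares solution of
`J θ d = g θ`, so `h = d - e` is the least squares solution for the right-hand side
`g θ - J θ e = r + g θhat`, where the Taylor remainder `r` has norm at most `Λ ‖e‖²`. By
stationarity `⟪J θ h, g θhat⟫ = ⟪(J θ - J θhat) h, g θhat⟫ ≤ Λ ‖e‖ φ ‖h‖`. Hence
`s ‖h‖ ≤ ‖J θ h‖ ≤ Λ ‖e‖ (‖e‖ + φ / s)`, and the step `θ - γ d - θhat = (1 - γ) e - γ h` contracts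
by `1 - γt` as soon as `‖e‖ + φ / s ≤ ((γ - γt) / γ) s / Λ`.
-/

open Metric WithLp
open scoped RealInnerProductSpace

section Sequences

lemma le_mul_and_le_pow_mul_of_contracting_below {u : ℕ → ℝ} {q ρ : ℝ} (hq₀ : 0 ≤ q) (hq₁ : q ≤ 1)
    (hu : ∀ k, 0 ≤ u k) (h₀ : u 0 ≤ ρ) (hstep : ∀ k, u k ≤ ρ → u (k + 1) ≤ q * u k) (k : ℕ) :
    u (k + 1) ≤ q * u k ∧ u (k + 1) ≤ q ^ (k + 1) * u 0 := by
  have hle : ∀ k, u k ≤ ρ := by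
    intro k
    induction k with
    | zero => exact h₀
    | succ k ih => exact (hstep k ih).trans ((mul_le_of_le_one_left (hu k) hq₁).trans ih)
  exact ⟨hstep k (hle k), le_geom hq₀ (k + 1) fun j _ => hstep j (hle j)⟩

end Sequences

section NormedSpace

variable {E F : Type*} [NormedAddCommGroup E] [NormedSpace ℝ E]
  [NormedAddCommGroup F] [NormedSpace ℝ F]

lemma norm_sub_sub_apply_le_of_lipschitz_segment {f : E → F} {f' : E → E →L[ℝ] F} {x y : E}
    {K : ℝ} (hK : 0 ≤ K)
    (hf : ∀ z ∈ segment ℝ x y, HasFDerivWithinAt f (f' z) (segment ℝ x y) z)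
    (hLip : ∀ z ∈ segment ℝ x y, ‖f' z - f' y‖ ≤ K * ‖z - y‖) :
    ‖f y - f x - f' y (y - x)‖ ≤ K * ‖y - x‖ ^ 2 := by
  have hbound : ∀ z ∈ segment ℝ x y, ‖f' z - f' y‖ ≤ K * ‖y - x‖ := by
    intro z hz
    have hzy : ‖z - y‖ ≤ ‖y - x‖ := by
      rw [norm_sub_rev y x]
      exact norm_sub_le_of_mem_segment (segment_symm ℝ x y ▸ hz)
    exact (hLip z hz).trans (by gcongr)
  calc ‖f y - f x - f' y (y - x)‖
      ≤ K * ‖y - x‖ * ‖y - x‖ :=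
        (convex_segment x y).norm_image_sub_le_of_norm_hasFDerivWithin_le' hf hbound
          (left_mem_segment ℝ x y) (right_mem_segment ℝ x y)
    _ = K * ‖y - x‖ ^ 2 := by ring

variable {f : E → ℝ} {d : ℕ}

lemma apply_eq_apply_normalize_mul (hhom : ∀ (c : ℝ) v, f (c • v) = |c| ^ d * f v) {v : E}
    (hv : v ≠ 0) : f v = f (‖v‖⁻¹ • v) * ‖v‖ ^ d := by
  have hpos : 0 < ‖v‖ := norm_pos_iff.2 hv
  rw [hhom, abs_of_pos (inv_pos.2 hpos), inv_pow]
  field_simp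

lemma normalize_mem_sphere {v : E} (hv : v ≠ 0) : ‖v‖⁻¹ • v ∈ sphere (0 : E) 1 := by
  simp [norm_smul, hv]

lemma apply_zero_of_homogeneous (hd : d ≠ 0) (hhom : ∀ (c : ℝ) v, f (c • v) = |c| ^ d * f v) :
    f 0 = 0 := by
  simpa [hd] using hhom 0 0

variable [ProperSpace E]

lemma le_sSup_image_sphere_mul_norm_pow (hd : d ≠ 0) (hf : Continuous f)
    (hhom : ∀ (c : ℝ) v, f (c • v) = |c| ^ d * f v) (v : E) :
    f v ≤ sSup (f '' sphere 0 1) * ‖v‖ ^ d := by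
  rcases eq_or_ne v 0 with rfl | hv
  · simp [apply_zero_of_homogeneous hd hhom, hd]
  · rw [apply_eq_apply_normalize_mul hhom hv]
    gcongr
    exact le_csSup ((isCompact_sphere 0 1).bddAbove_image hf.continuousOn)
      (mem_image_of_mem f (normalize_mem_sphere hv))

lemma sInf_image_sphere_mul_norm_pow_le (hd : d ≠ 0) (hf : Continuous f)
    (hhom : ∀ (c : ℝ) v, f (c • v) = |c| ^ d * f v) (v : E) :
    sInf (f '' sphere 0 1) * ‖v‖ ^ d ≤ f v := by
  rcases eq_or_ne v 0 with rfl | hv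
  · simp [apply_zero_of_homogeneous hd hhom, hd]
  · rw [apply_eq_apply_normalize_mul hhom hv]
    gcongr
    exact csInf_le ((isCompact_sphere 0 1).bddBelow_image hf.continuousOn)
      (mem_image_of_mem f (normalize_mem_sphere hv))

end NormedSpace

section LeastSquares

variable {E F : Type*} [NormedAddCommGroup E] [NormedSpace ℝ E]
  [NormedAddCommGroup F] [InnerProductSpace ℝ F]

/-- `d` solves the linear least squares problem `min ‖A d - y‖`. This is the weak form of the
normal equations `A* A d = A* y`, which needs neither an adjoint nor an invertible `A* A`. -/
def IsLeastSquaresSolution (A : E →L[ℝ] F) (y : F) (d : E) : Prop :=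
  ∀ v, ⟪A v, A d - y⟫ = 0

namespace IsLeastSquaresSolution

variable {A : E →L[ℝ] F} {y : F} {d : E}

lemma sub_apply (hd : IsLeastSquaresSolution A y d) (e : E) :
    IsLeastSquaresSolution A (y - A e) (d - e) := by
  intro v
  simpa only [map_sub, sub_sub_sub_cancel_right] using hd v

lemma mul_norm_le {s κ : ℝ} {r : F} (hd : IsLeastSquaresSolution A y d) (hs : 0 < s) (hκ : 0 ≤ κ)
    (hA : ∀ v, s * ‖v‖ ≤ ‖A v‖) (hr : ⟪A d, y - r⟫ ≤ κ * ‖d‖) :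
    s * ‖d‖ ≤ ‖r‖ + κ / s := by
  have hself : ‖A d‖ * ‖A d‖ = ⟪A d, r⟫ + ⟪A d, y - r⟫ := by
    rw [← inner_add_right, add_sub_cancel, ← real_inner_self_eq_norm_mul_norm]
    simpa only [inner_sub_right, sub_eq_zero] using hd d
  have hdiv : κ * ‖d‖ ≤ κ / s * ‖A d‖ := by
    rw [div_mul_eq_mul_div, le_div_iff₀ hs, mul_assoc, mul_comm ‖d‖]
    exact mul_le_mul_of_nonneg_left (hA d) hκ
  have hmul : ‖A d‖ * ‖A d‖ ≤ ‖A d‖ * (‖r‖ + κ / s) := by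
    linarith [real_inner_le_norm (A d) r]
  refine (hA d).trans ?_
  rcases (norm_nonneg (A d)).eq_or_lt with hzero | hpos
  · rw [← hzero]
    positivity
  · exact le_of_mul_le_mul_left hmul hpos

end IsLeastSquaresSolution

end LeastSquares

section GaussNewton

variable {E F : Type*} [NormedAddCommGroup E] [NormedSpace ℝ E]
  [NormedAddCommGroup F] [InnerProductSpace ℝ F]

/-- The standing assumptions of the local analysis of the Gauss-Newton method for minimizing
`‖g θ‖ ^ 2`: on the closed ball of radius `R` about `θhat` the residual `g` has derivative `J`,
which is `Λ`-Lipschitz and bounded below by `s`, and `θhat` is a stationary point. -/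
structure IsGaussNewtonRegular (g : E → F) (J : E → E →L[ℝ] F) (θhat : E) (R Λ s : ℝ) :
    Prop where
  hasFDerivAt : ∀ θ ∈ closedBall θhat R, HasFDerivAt g (J θ) θ
  norm_jacobian_sub_le : ∀ θ₁ ∈ closedBall θhat R, ∀ θ₂ ∈ closedBall θhat R,
    ‖J θ₁ - J θ₂‖ ≤ Λ * ‖θ₁ - θ₂‖
  mul_norm_le_norm_apply : ∀ θ ∈ closedBall θhat R, ∀ v, s * ‖v‖ ≤ ‖J θ v‖
  inner_apply_residual_eq_zero : ∀ v, ⟪J θhat v, g θhat⟫ = 0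

/-- The radius on which a Gauss-Newton step of length `γ` contracts by the factor `1 - γt`, for a
residual of norm `φ` at the stationary point and a Jacobian that is `Λ`-Lipschitz and bounded below
by `s`. -/
def gaussNewtonRadius (Λ s φ γ γt : ℝ) : ℝ := (γ - γt) / γ * (s / Λ) - φ / s

lemma exists_gaussNewtonRadius_pos {Λ s φ γ : ℝ} (hΛ : 0 < Λ) (hs : 0 < s) (hγ : 0 < γ)
    (hφ₀ : 0 ≤ φ) (hφ : φ < s ^ 2 / Λ) :
    ∃ γt, 0 < γt ∧ γt < γ ∧ 0 < gaussNewtonRadius Λ s φ γ γt := by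
  have hratio : φ / s * (Λ / s) < 1 := by
    rw [lt_div_iff₀ hΛ] at hφ
    rw [div_mul_div_comm, div_lt_one (by positivity), ← sq]
    exact hφ
  obtain ⟨q, hq, hq₁⟩ := exists_between hratio
  have hq₀ : 0 < q := lt_of_le_of_lt (by positivity) hq
  refine ⟨γ * (1 - q), mul_pos hγ (by linarith), by nlinarith, ?_⟩
  have hqγ : (γ - γ * (1 - q)) / γ = q := by field_simp; ring
  rw [gaussNewtonRadius, hqγ, sub_pos]
  rwa [← lt_div_iff₀ (by positivity), div_div_eq_mul_div, mul_div_assoc] at hq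

namespace IsGaussNewtonRegular

variable {g : E → F} {J : E → E →L[ℝ] F} {θhat θ d : E} {R Λ s γ γt : ℝ}

lemma norm_taylor_remainder_le (h : IsGaussNewtonRegular g J θhat R Λ s) (hΛ : 0 ≤ Λ)
    (hθ : θ ∈ closedBall θhat R) :
    ‖g θ - g θhat - J θ (θ - θhat)‖ ≤ Λ * ‖θ - θhat‖ ^ 2 := by
  have hseg : segment ℝ θhat θ ⊆ closedBall θhat R :=
    (convex_closedBall θhat R).segment_subset (mem_closedBall_self (dist_nonneg.trans hθ)) hθ
  exact norm_sub_sub_apply_le_of_lipschitz_segment hΛ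
    (fun z hz => (h.hasFDerivAt z (hseg hz)).hasFDerivWithinAt)
    (fun z hz => h.norm_jacobian_sub_le z (hseg hz) θ hθ)

lemma inner_apply_residual_le (h : IsGaussNewtonRegular g J θhat R Λ s)
    (hθ : θ ∈ closedBall θhat R) (v : E) :
    ⟪J θ v, g θhat⟫ ≤ Λ * ‖θ - θhat‖ * ‖g θhat‖ * ‖v‖ :=
  calc ⟪J θ v, g θhat⟫
      = ⟪(J θ - J θhat) v, g θhat⟫ := by
        rw [_root_.sub_apply, inner_sub_left, h.inner_apply_residual_eq_zero, sub_zero]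
    _ ≤ ‖(J θ - J θhat) v‖ * ‖g θhat‖ := real_inner_le_norm _ _
    _ ≤ Λ * ‖θ - θhat‖ * ‖v‖ * ‖g θhat‖ := by
        gcongr
        exact (J θ - J θhat).le_of_opNorm_le (h.norm_jacobian_sub_le θ hθ θhat
          (mem_closedBall_self (dist_nonneg.trans hθ))) v
    _ = Λ * ‖θ - θhat‖ * ‖g θhat‖ * ‖v‖ := by ring

lemma mul_norm_direction_sub_le (h : IsGaussNewtonRegular g J θhat R Λ s) (hΛ : 0 ≤ Λ)
    (hs : 0 < s) (hθ : θ ∈ closedBall θhat R) (hd : IsLeastSquaresSolution (J θ) (g θ) d) :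
    s * ‖d - (θ - θhat)‖ ≤ Λ * ‖θ - θhat‖ * (‖θ - θhat‖ + ‖g θhat‖ / s) := by
  have hresidual : g θ - J θ (θ - θhat) - (g θ - g θhat - J θ (θ - θhat)) = g θhat := by abel
  have hbound := (hd.sub_apply (θ - θhat)).mul_norm_le (r := g θ - g θhat - J θ (θ - θhat))
    (κ := Λ * ‖θ - θhat‖ * ‖g θhat‖) hs (by positivity) (h.mul_norm_le_norm_apply θ hθ)
    (hresidual.symm ▸ h.inner_apply_residual_le hθ _)
  calc s * ‖d - (θ - θhat)‖
      ≤ Λ * ‖θ - θhat‖ ^ 2 + Λ * ‖θ - θhat‖ * ‖g θhat‖ / s :=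
        hbound.trans (by gcongr; exact h.norm_taylor_remainder_le hΛ hθ)
    _ = Λ * ‖θ - θhat‖ * (‖θ - θhat‖ + ‖g θhat‖ / s) := by ring

lemma norm_step_sub_le (h : IsGaussNewtonRegular g J θhat R Λ s) (hΛ : 0 < Λ) (hs : 0 < s)
    (hγ₀ : 0 < γ) (hγ₁ : γ ≤ 1) (hθ : θ ∈ closedBall θhat R)
    (hrad : ‖θ - θhat‖ ≤ gaussNewtonRadius Λ s ‖g θhat‖ γ γt)
    (hd : IsLeastSquaresSolution (J θ) (g θ) d) :
    ‖θ - γ • d - θhat‖ ≤ (1 - γt) * ‖θ - θhat‖ := by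
  have hdir : γ * ‖d - (θ - θhat)‖ ≤ (γ - γt) * ‖θ - θhat‖ := by
    refine le_of_mul_le_mul_left ?_ hs
    calc s * (γ * ‖d - (θ - θhat)‖)
        = γ * (s * ‖d - (θ - θhat)‖) := by ring
      _ ≤ γ * (Λ * ‖θ - θhat‖ * (‖θ - θhat‖ + ‖g θhat‖ / s)) :=
          mul_le_mul_of_nonneg_left (h.mul_norm_direction_sub_le hΛ.le hs hθ hd) hγ₀.le
      _ ≤ γ * (Λ * ‖θ - θhat‖ * ((γ - γt) / γ * (s / Λ))) := by
          gcongr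
          exact le_sub_iff_add_le.1 hrad
      _ = s * ((γ - γt) * ‖θ - θhat‖) := by field_simp
  calc ‖θ - γ • d - θhat‖
      = ‖(1 - γ) • (θ - θhat) - γ • (d - (θ - θhat))‖ := by congr 1; module
    _ ≤ (1 - γ) * ‖θ - θhat‖ + γ * ‖d - (θ - θhat)‖ := by
        refine (norm_sub_le _ _).trans_eq ?_
        rw [norm_smul_of_nonneg (by linarith), norm_smul_of_nonneg hγ₀.le]
    _ ≤ (1 - γt) * ‖θ - θhat‖ := by linarith

theorem norm_iterate_sub_le (h : IsGaussNewtonRegular g J θhat R Λ s) (hΛ : 0 < Λ) (hs : 0 < s)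
    (hγ₁ : γ ≤ 1) (hγt₀ : 0 < γt) (hγt : γt < γ) {θseq dir : ℕ → E}
    (h₀ : ‖θseq 0 - θhat‖ ≤ min (gaussNewtonRadius Λ s ‖g θhat‖ γ γt) R)
    (hdir : ∀ k, θseq k ∈ closedBall θhat R →
      IsLeastSquaresSolution (J (θseq k)) (g (θseq k)) (dir k))
    (hstep : ∀ k, θseq (k + 1) = θseq k - γ • dir k) (k : ℕ) :
    ‖θseq (k + 1) - θhat‖ ≤ (1 - γt) * ‖θseq k - θhat‖ ∧
      ‖θseq (k + 1) - θhat‖ ≤ (1 - γt) ^ (k + 1) * ‖θseq 0 - θhat‖ := by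
  refine le_mul_and_le_pow_mul_of_contracting_below (u := fun k => ‖θseq k - θhat‖)
    (by linarith) (by linarith) (fun _ => norm_nonneg _) h₀ (fun k hk => ?_) k
  have hmem : θseq k ∈ closedBall θhat R :=
    mem_closedBall_iff_norm.2 (hk.trans (min_le_right _ _))
  rw [hstep k]
  exact h.norm_step_sub_le hΛ hs (hγt₀.trans hγt) hγ₁ hmem (hk.trans (min_le_left _ _))
    (hdir k hmem)

end IsGaussNewtonRegular

end GaussNewton

section Matrix

variable {ι κ : Type*} [Fintype ι] [Fintype κ]

open scoped MatrixOrder Matrix.Norms.L2Operator in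
lemma exists_eq_transpose_mul_self {W : Matrix ι ι ℝ} (hW : W.PosSemidef) :
    ∃ B : Matrix ι ι ℝ, W = Bᵀ * B := by
  classical
  obtain ⟨B, hB⟩ := CStarAlgebra.nonneg_iff_eq_star_mul_self.1 hW.nonneg
  exact ⟨B, by rw [hB, star_eq_conjTranspose, conjTranspose_eq_transpose_of_trivial]⟩

variable [DecidableEq κ]

lemma injective_mulVec_of_mul_norm_le {M : Matrix ι κ ℝ} {s : ℝ} (hs : 0 < s)
    (hM : ∀ v, s * ‖v‖ ≤ ‖toEuclideanLin M v‖) : Function.Injective M.mulVec := by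
  refine (injective_iff_map_eq_zero M.mulVecLin).2 fun v hv => ?_
  have hzero : toEuclideanLin M (toLp 2 v) = 0 := congrArg (toLp 2) hv
  have hnorm : s * ‖toLp 2 v‖ ≤ 0 := by simpa only [hzero, norm_zero] using hM (toLp 2 v)
  have hv₀ : toLp 2 v = 0 := norm_le_zero_iff.1 (nonpos_of_mul_nonpos_right hnorm hs)
  exact (toLp_eq_zero 2).1 hv₀

lemma isLeastSquaresSolution_toEuclideanLin {M : Matrix ι κ ℝ}
    (hM : Function.Injective M.mulVec) (y : ι → ℝ) :
    IsLeastSquaresSolution (toEuclideanLin M).toContinuousLinearMap (toLp 2 y)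
      (toLp 2 ((Mᵀ * M)⁻¹ *ᵥ (Mᵀ *ᵥ y))) := by
  have hdet : IsUnit (Mᵀ * M).det := by
    rw [← isUnit_iff_isUnit_det, ← conjTranspose_eq_transpose_of_trivial]
    exact (PosDef.conjTranspose_mul_self M hM).isUnit
  have hnormal : Mᵀ *ᵥ (M *ᵥ ((Mᵀ * M)⁻¹ *ᵥ (Mᵀ *ᵥ y)) - y) = 0 := by
    rw [mulVec_sub, mulVec_mulVec _ Mᵀ M, mulVec_mulVec _ (Mᵀ * M), mul_nonsing_inv _ hdet,
      one_mulVec, sub_self]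
  intro v
  change (M *ᵥ ((Mᵀ * M)⁻¹ *ᵥ (Mᵀ *ᵥ y)) - y) ⬝ᵥ (M *ᵥ ofLp v) = 0
  rw [dotProduct_mulVec, ← mulVec_transpose, hnormal, zero_dotProduct]

end Matrix

section EuclideanNorm

variable {m n p : ℕ}

lemma enorm'_eq_norm_toLp (v : Fin n → ℝ) : enorm' v = ‖toLp 2 v‖ := by
  simp [enorm', EuclideanSpace.norm_eq]

lemma enorm'_nonneg (v : Fin n → ℝ) : 0 ≤ enorm' v := Real.sqrt_nonneg _

lemma enorm'_sq (v : Fin n → ℝ) : enorm' v ^ 2 = v ⬝ᵥ v := by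
  rw [enorm', Real.sq_sqrt (Finset.sum_nonneg fun i _ => sq_nonneg _)]
  simp only [dotProduct, sq]

lemma continuous_enorm' : Continuous (enorm' : (Fin n → ℝ) → ℝ) := by
  unfold enorm'
  fun_prop

lemma enorm'_smul (c : ℝ) (v : Fin n → ℝ) : enorm' (c • v) = |c| * enorm' v := by
  simp only [enorm'_eq_norm_toLp, toLp_smul, norm_smul, Real.norm_eq_abs]

lemma setOf_enorm'_eq_one_eq_image_sphere (f : (Fin n → ℝ) → ℝ) :
    {c : ℝ | ∃ v : Fin n → ℝ, enorm' v = 1 ∧ c = f v} =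
      (fun x : EuclideanSpace ℝ (Fin n) => f (ofLp x)) '' sphere 0 1 := by
  ext c
  constructor
  · rintro ⟨v, hv, rfl⟩
    exact ⟨toLp 2 v, by rwa [mem_sphere_zero_iff_norm, ← enorm'_eq_norm_toLp], rfl⟩
  · rintro ⟨x, hx, rfl⟩
    exact ⟨ofLp x, by rwa [enorm'_eq_norm_toLp, toLp_ofLp, ← mem_sphere_zero_iff_norm], rfl⟩

lemma le_sSup_mul_enorm'_pow {f : (Fin n → ℝ) → ℝ} {d : ℕ} (hd : d ≠ 0) (hf : Continuous f)
    (hhom : ∀ (c : ℝ) v, f (c • v) = |c| ^ d * f v) (v : Fin n → ℝ) :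
    f v ≤ sSup {c : ℝ | ∃ v : Fin n → ℝ, enorm' v = 1 ∧ c = f v} * enorm' v ^ d := by
  rw [setOf_enorm'_eq_one_eq_image_sphere, enorm'_eq_norm_toLp]
  exact le_sSup_image_sphere_mul_norm_pow hd (hf.comp (PiLp.continuous_ofLp 2 _))
    (fun c x => hhom c (ofLp x)) (toLp 2 v)

lemma sInf_mul_enorm'_pow_le {f : (Fin n → ℝ) → ℝ} {d : ℕ} (hd : d ≠ 0) (hf : Continuous f)
    (hhom : ∀ (c : ℝ) v, f (c • v) = |c| ^ d * f v) (v : Fin n → ℝ) :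
    sInf {c : ℝ | ∃ v : Fin n → ℝ, enorm' v = 1 ∧ c = f v} * enorm' v ^ d ≤ f v := by
  rw [setOf_enorm'_eq_one_eq_image_sphere, enorm'_eq_norm_toLp]
  exact sInf_image_sphere_mul_norm_pow_le hd (hf.comp (PiLp.continuous_ofLp 2 _))
    (fun c x => hhom c (ofLp x)) (toLp 2 v)

lemma continuous_enorm'_mulVec (A : Matrix (Fin m) (Fin p) ℝ) :
    Continuous fun v => enorm' (A *ᵥ v) :=
  continuous_enorm'.comp (continuous_const.matrix_mulVec continuous_id)

lemma enorm'_mulVec_smul (A : Matrix (Fin m) (Fin p) ℝ) (c : ℝ) (v : Fin p → ℝ) :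
    enorm' (A *ᵥ (c • v)) = |c| ^ 1 * enorm' (A *ᵥ v) := by
  rw [mulVec_smul, enorm'_smul, pow_one]

lemma enorm'_mulVec_le_sigMax_mul (A : Matrix (Fin m) (Fin p) ℝ) (v : Fin p → ℝ) :
    enorm' (A *ᵥ v) ≤ sigMax A * enorm' v := by
  simpa only [sigMax, pow_one] using le_sSup_mul_enorm'_pow one_ne_zero (continuous_enorm'_mulVec A)
    (enorm'_mulVec_smul A) v

lemma sigMin_mul_le_enorm'_mulVec (A : Matrix (Fin m) (Fin p) ℝ) (v : Fin p → ℝ) :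
    sigMin A * enorm' v ≤ enorm' (A *ᵥ v) := by
  simpa only [sigMin, pow_one] using sInf_mul_enorm'_pow_le one_ne_zero (continuous_enorm'_mulVec A)
    (enorm'_mulVec_smul A) v

lemma continuous_dotProduct_mulVec_self (A : Matrix (Fin n) (Fin n) ℝ) :
    Continuous fun v => v ⬝ᵥ (A *ᵥ v) :=
  continuous_id.dotProduct (continuous_const.matrix_mulVec continuous_id)

lemma dotProduct_mulVec_smul_self (A : Matrix (Fin n) (Fin n) ℝ) (c : ℝ) (v : Fin n → ℝ) :
    (c • v) ⬝ᵥ (A *ᵥ (c • v)) = |c| ^ 2 * (v ⬝ᵥ (A *ᵥ v)) := by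
  rw [mulVec_smul, smul_dotProduct, dotProduct_smul, sq_abs, smul_smul, ← sq, smul_eq_mul]

lemma wnorm_le_sqrt_mul_enorm' {W : Matrix (Fin m) (Fin m) ℝ} {c : ℝ} (hc : lamMax W ≤ c)
    (hc₀ : 0 ≤ c) (v : Fin m → ℝ) : wnorm W v ≤ √c * enorm' v := by
  rw [wnorm, ← Real.sqrt_sq (enorm'_nonneg v), ← Real.sqrt_mul hc₀]
  refine Real.sqrt_le_sqrt ((le_sSup_mul_enorm'_pow two_ne_zero
    (continuous_dotProduct_mulVec_self W) (dotProduct_mulVec_smul_self W) v).trans ?_)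
  exact mul_le_mul_of_nonneg_right hc (sq_nonneg _)

lemma sqrt_mul_enorm'_le_wnorm {W : Matrix (Fin m) (Fin m) ℝ} {c : ℝ} (hc : c ≤ lamMin W)
    (hc₀ : 0 ≤ c) (v : Fin m → ℝ) : √c * enorm' v ≤ wnorm W v := by
  rw [wnorm, ← Real.sqrt_sq (enorm'_nonneg v), ← Real.sqrt_mul hc₀]
  refine Real.sqrt_le_sqrt (le_trans ?_ (sInf_mul_enorm'_pow_le two_ne_zero
    (continuous_dotProduct_mulVec_self W) (dotProduct_mulVec_smul_self W) v))
  exact mul_le_mul_of_nonneg_right hc (sq_nonneg _)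

lemma wnorm_transpose_mul_self (B : Matrix (Fin n) (Fin m) ℝ) (v : Fin m → ℝ) :
    wnorm (Bᵀ * B) v = enorm' (B *ᵥ v) := by
  rw [wnorm, ← mulVec_mulVec, dotProduct_mulVec, vecMul_transpose, ← enorm'_sq,
    Real.sqrt_sq (enorm'_nonneg _)]

end EuclideanNorm

section Whitening

variable {n m p : ℕ}

/-- The residual `B g`, as a map between Euclidean spaces. When `W = Bᵀ B`, its Euclidean norm is
the `W`-norm of `g`. -/
def whitenedResidual (B : Matrix (Fin n) (Fin m) ℝ) (g : (Fin p → ℝ) → Fin m → ℝ)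
    (θ : EuclideanSpace ℝ (Fin p)) : EuclideanSpace ℝ (Fin n) :=
  toLp 2 (B *ᵥ g (ofLp θ))

/-- The Jacobian `B G` of `whitenedResidual B g`, where `G` is the Jacobian of `g`. -/
def whitenedJacobian (B : Matrix (Fin n) (Fin m) ℝ)
    (G : (Fin p → ℝ) → Matrix (Fin m) (Fin p) ℝ) (θ : EuclideanSpace ℝ (Fin p)) :
    EuclideanSpace ℝ (Fin p) →L[ℝ] EuclideanSpace ℝ (Fin n) :=
  (toEuclideanLin (B * G (ofLp θ))).toContinuousLinearMap

variable {B : Matrix (Fin n) (Fin m) ℝ} {g : (Fin p → ℝ) → Fin m → ℝ}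
  {G : (Fin p → ℝ) → Matrix (Fin m) (Fin p) ℝ}

lemma norm_whitenedResidual (θ : EuclideanSpace ℝ (Fin p)) :
    ‖whitenedResidual B g θ‖ = wnorm (Bᵀ * B) (g (ofLp θ)) := by
  rw [wnorm_transpose_mul_self, enorm'_eq_norm_toLp, whitenedResidual]

lemma whitenedJacobian_apply (θ v : EuclideanSpace ℝ (Fin p)) :
    whitenedJacobian B G θ v = toLp 2 (B *ᵥ (G (ofLp θ) *ᵥ ofLp v)) := by
  rw [mulVec_mulVec]
  rfl

lemma norm_whitenedJacobian_apply (θ v : EuclideanSpace ℝ (Fin p)) :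
    ‖whitenedJacobian B G θ v‖ = wnorm (Bᵀ * B) (G (ofLp θ) *ᵥ ofLp v) := by
  rw [whitenedJacobian_apply, wnorm_transpose_mul_self, enorm'_eq_norm_toLp]

lemma hasFDerivAt_whitenedResidual {θ : EuclideanSpace ℝ (Fin p)}
    (hg : HasFDerivAt g (toCLM (G (ofLp θ))) (ofLp θ)) :
    HasFDerivAt (whitenedResidual B g) (whitenedJacobian B G θ) θ := by
  have hB := (toCLM B).hasFDerivAt.comp θ (hg.comp θ (PiLp.hasFDerivAt_ofLp 2 θ))
  refine ((PiLp.hasFDerivAt_toLp 2 _).comp θ hB).congr_fderiv ?_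
  ext1 v
  rw [whitenedJacobian_apply]
  rfl

lemma norm_whitenedJacobian_sub_le {Whi K : ℝ} (hWhi₀ : 0 ≤ Whi)
    (hWhi : lamMax (Bᵀ * B) ≤ Whi) (hK : 0 ≤ K) {θ₁ θ₂ : EuclideanSpace ℝ (Fin p)}
    (hG : sigMax (G (ofLp θ₁) - G (ofLp θ₂)) ≤ K) :
    ‖whitenedJacobian B G θ₁ - whitenedJacobian B G θ₂‖ ≤ √Whi * K := by
  refine ContinuousLinearMap.opNorm_le_bound _ (by positivity) fun v => ?_
  have hdiff : (whitenedJacobian B G θ₁ - whitenedJacobian B G θ₂) v =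
      toLp 2 (B *ᵥ ((G (ofLp θ₁) - G (ofLp θ₂)) *ᵥ ofLp v)) := by
    rw [_root_.sub_apply, whitenedJacobian_apply, whitenedJacobian_apply, ← toLp_sub,
      ← mulVec_sub, ← sub_mulVec]
  rw [hdiff, ← enorm'_eq_norm_toLp, ← wnorm_transpose_mul_self]
  calc wnorm (Bᵀ * B) ((G (ofLp θ₁) - G (ofLp θ₂)) *ᵥ ofLp v)
      ≤ √Whi * enorm' ((G (ofLp θ₁) - G (ofLp θ₂)) *ᵥ ofLp v) :=
        wnorm_le_sqrt_mul_enorm' hWhi hWhi₀ _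
    _ ≤ √Whi * (K * enorm' (ofLp v)) := by
        gcongr
        exact (enorm'_mulVec_le_sigMax_mul _ _).trans
          (mul_le_mul_of_nonneg_right hG (enorm'_nonneg _))
    _ = √Whi * K * ‖v‖ := by rw [enorm'_eq_norm_toLp, toLp_ofLp, mul_assoc]

lemma mul_norm_le_norm_whitenedJacobian_apply {Wlo σlo : ℝ} (hWlo₀ : 0 ≤ Wlo)
    (hWlo : Wlo ≤ lamMin (Bᵀ * B)) {θ : EuclideanSpace ℝ (Fin p)}
    (hσ : σlo ≤ sigMin (G (ofLp θ))) (v : EuclideanSpace ℝ (Fin p)) :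
    σlo * √Wlo * ‖v‖ ≤ ‖whitenedJacobian B G θ v‖ := by
  rw [norm_whitenedJacobian_apply]
  calc σlo * √Wlo * ‖v‖
      = √Wlo * (σlo * enorm' (ofLp v)) := by rw [enorm'_eq_norm_toLp, toLp_ofLp]; ring
    _ ≤ √Wlo * enorm' (G (ofLp θ) *ᵥ ofLp v) := by
        gcongr
        exact (mul_le_mul_of_nonneg_right hσ (enorm'_nonneg _)).trans
          (sigMin_mul_le_enorm'_mulVec _ _)
    _ ≤ wnorm (Bᵀ * B) (G (ofLp θ) *ᵥ ofLp v) := sqrt_mul_enorm'_le_wnorm hWlo hWlo₀ _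

lemma inner_whitenedJacobian_whitenedResidual_eq_zero {θ : EuclideanSpace ℝ (Fin p)}
    (hfoc : (G (ofLp θ))ᵀ *ᵥ ((Bᵀ * B) *ᵥ g (ofLp θ)) = 0) (v : EuclideanSpace ℝ (Fin p)) :
    ⟪whitenedJacobian B G θ v, whitenedResidual B g θ⟫ = 0 := by
  change (B *ᵥ g (ofLp θ)) ⬝ᵥ ((B * G (ofLp θ)) *ᵥ ofLp v) = 0
  rw [dotProduct_mulVec, ← mulVec_transpose, transpose_mul, ← mulVec_mulVec, mulVec_mulVec _ Bᵀ,
    hfoc, zero_dotProduct]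

lemma isLeastSquaresSolution_whitened {s : ℝ} (hs : 0 < s) {θ : EuclideanSpace ℝ (Fin p)}
    (hJ : ∀ v, s * ‖v‖ ≤ ‖whitenedJacobian B G θ v‖) :
    IsLeastSquaresSolution (whitenedJacobian B G θ) (whitenedResidual B g θ)
      (toLp 2 (((G (ofLp θ))ᵀ * (Bᵀ * B) * G (ofLp θ))⁻¹ *ᵥ
        ((G (ofLp θ))ᵀ *ᵥ ((Bᵀ * B) *ᵥ g (ofLp θ))))) := by
  have hgram : (G (ofLp θ))ᵀ * (Bᵀ * B) * G (ofLp θ) =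
      (B * G (ofLp θ))ᵀ * (B * G (ofLp θ)) := by
    simp only [transpose_mul, Matrix.mul_assoc]
  have hgrad : (G (ofLp θ))ᵀ *ᵥ ((Bᵀ * B) *ᵥ g (ofLp θ)) =
      (B * G (ofLp θ))ᵀ *ᵥ (B *ᵥ g (ofLp θ)) := by
    simp only [transpose_mul, mulVec_mulVec, Matrix.mul_assoc]
  rw [hgram, hgrad]
  exact isLeastSquaresSolution_toEuclideanLin (injective_mulVec_of_mul_norm_le hs hJ) _

lemma toLp_mem_closedBall_iff {θ θhat : Fin p → ℝ} {R : ℝ} :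
    toLp 2 θ ∈ closedBall (toLp 2 θhat) R ↔ enorm' (θ - θhat) ≤ R := by
  rw [mem_closedBall_iff_norm, enorm'_eq_norm_toLp, toLp_sub]

lemma isGaussNewtonRegular_whitened {θhat : Fin p → ℝ} {L σlo RG Wlo Whi : ℝ}
    (hG : ∀ θ, enorm' (θ - θhat) ≤ RG → HasFDerivAt g (toCLM (G θ)) θ)
    (hWlo : 0 ≤ Wlo) (hWmin : Wlo ≤ lamMin (Bᵀ * B))
    (hWhi : 0 ≤ Whi) (hWmax : lamMax (Bᵀ * B) ≤ Whi)
    (hfoc : (G θhat)ᵀ *ᵥ ((Bᵀ * B) *ᵥ g θhat) = 0) (hL : 0 ≤ L)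
    (hLip : ∀ θ₁ θ₂, enorm' (θ₁ - θhat) ≤ RG → enorm' (θ₂ - θhat) ≤ RG →
      sigMax (G θ₁ - G θ₂) ≤ L * enorm' (θ₁ - θ₂))
    (hσ : ∀ θ, enorm' (θ - θhat) ≤ RG → σlo ≤ sigMin (G θ)) :
    IsGaussNewtonRegular (whitenedResidual B g) (whitenedJacobian B G) (toLp 2 θhat) RG
      (L * √Whi) (σlo * √Wlo) where
  hasFDerivAt θ hθ := hasFDerivAt_whitenedResidual (hG _ (toLp_mem_closedBall_iff.1 hθ))
  norm_jacobian_sub_le θ₁ hθ₁ θ₂ hθ₂ := by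
    have hG₁₂ := hLip _ _ (toLp_mem_closedBall_iff.1 hθ₁) (toLp_mem_closedBall_iff.1 hθ₂)
    refine (norm_whitenedJacobian_sub_le hWhi hWmax
      (mul_nonneg hL (enorm'_nonneg _)) hG₁₂).trans_eq ?_
    rw [enorm'_eq_norm_toLp, toLp_sub, toLp_ofLp, toLp_ofLp]
    ring
  mul_norm_le_norm_apply θ hθ :=
    mul_norm_le_norm_whitenedJacobian_apply hWlo hWmin (hσ _ (toLp_mem_closedBall_iff.1 hθ))
  inner_apply_residual_eq_zero := inner_whitenedJacobian_whitenedResidual_eq_zero hfoc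

end Whitening

lemma gaussNewtonRadius_eq {L σlo Wlo Whi φ γ γt : ℝ} (hWlo : 0 ≤ Wlo) :
    gaussNewtonRadius (L * √Whi) (σlo * √Wlo) φ γ γt =
      ((γ - γt) / γ) * σlo * √(Wlo / Whi) / L - φ / (σlo * √Wlo) := by
  rw [gaussNewtonRadius, Real.sqrt_div hWlo]
  ring

theorem gauss_newton_local_convergence_misspecified_general
    {p m : ℕ} {g : (Fin p → ℝ) → (Fin m → ℝ)} {G : (Fin p → ℝ) → Matrix (Fin m) (Fin p) ℝ}
    {W : Matrix (Fin m) (Fin m) ℝ} {θhat : Fin p → ℝ} {L σlo RG Wlo Whi γ : ℝ}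
    (hG : ∀ θ, enorm' (θ - θhat) ≤ RG → HasFDerivAt g (toCLM (G θ)) θ)
    (hW : W.PosSemidef) (hWlo : 0 < Wlo) (hWmin : Wlo ≤ lamMin W) (hWmax : lamMax W ≤ Whi)
    (hfoc : (G θhat)ᵀ *ᵥ (W *ᵥ g θhat) = 0) (hL : 0 < L)
    (hLip : ∀ θ₁ θ₂, enorm' (θ₁ - θhat) ≤ RG → enorm' (θ₂ - θhat) ≤ RG →
      sigMax (G θ₁ - G θ₂) ≤ L * enorm' (θ₁ - θ₂))
    (hσpos : 0 < σlo) (hσ : ∀ θ, enorm' (θ - θhat) ≤ RG → σlo ≤ sigMin (G θ))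
    (hmis : wnorm W (g θhat) < σlo ^ 2 * Wlo / (L * √Whi)) (hγ : γ ∈ Set.Ioc (0 : ℝ) 1) :
    ∃ γt, 0 < γt ∧ γt < γ ∧
      0 < ((γ - γt) / γ) * σlo * √(Wlo / Whi) / L - wnorm W (g θhat) / (σlo * √Wlo) ∧
      ∀ θseq : ℕ → (Fin p → ℝ),
        enorm' (θseq 0 - θhat) ≤
          min (((γ - γt) / γ) * σlo * √(Wlo / Whi) / L
            - wnorm W (g θhat) / (σlo * √Wlo)) RG →
        (∀ k, θseq (k + 1) = θseq k
          - γ • (((G (θseq k))ᵀ * W * G (θseq k))⁻¹ *ᵥ ((G (θseq k))ᵀ *ᵥ (W *ᵥ g (θseq k))))) →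
        ∀ k, enorm' (θseq (k + 1) - θhat) ≤ (1 - γt) * enorm' (θseq k - θhat)
          ∧ enorm' (θseq (k + 1) - θhat)
            ≤ (1 - γt) ^ (k + 1) * enorm' (θseq 0 - θhat) := by
  have hφ₀ : 0 ≤ wnorm W (g θhat) := Real.sqrt_nonneg _
  -- Since `x / 0 = 0`, the bound on the misfit forces `√Whi ≠ 0`.
  have hWhi : 0 < Whi := by
    by_contra! h
    rw [Real.sqrt_eq_zero_of_nonpos h, mul_zero, div_zero] at hmis
    exact hmis.not_ge hφ₀
  have hs : 0 < σlo * √Wlo := by positivity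
  have hΛ : 0 < L * √Whi := by positivity
  obtain ⟨B, rfl⟩ := exists_eq_transpose_mul_self hW
  have hreg := isGaussNewtonRegular_whitened hG hWlo.le hWmin hWhi.le hWmax hfoc hL.le hLip hσ
  rw [← Real.sq_sqrt hWlo.le, ← mul_pow] at hmis
  obtain ⟨γt, hγt₀, hγt, hrad⟩ := exists_gaussNewtonRadius_pos hΛ hs hγ.1 hφ₀ hmis
  simp only [← gaussNewtonRadius_eq hWlo.le]
  refine ⟨γt, hγt₀, hγt, hrad, fun θseq h₀ hstep k => ?_⟩
  simp only [enorm'_eq_norm_toLp, toLp_sub] at h₀ ⊢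
  rw [← norm_whitenedResidual (toLp 2 θhat)] at h₀
  exact hreg.norm_iterate_sub_le (θseq := fun k => toLp 2 (θseq k)) hΛ hs hγ.2 hγt₀ hγt h₀
    (fun k hk => isLeastSquaresSolution_whitened hs (hreg.mul_norm_le_norm_apply _ hk))
    (fun k => congrArg (toLp 2) (hstep k)) k

/-- Local convergence of Gauss-Newton under moderate misspecification
(Proposition 3, deterministic core). -/
theorem gauss_newton_local_convergence_misspecified
    {p m : ℕ}
    (g : (Fin p → ℝ) → (Fin m → ℝ))
    (G : (Fin p → ℝ) → Matrix (Fin m) (Fin p) ℝ)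
    (W : Matrix (Fin m) (Fin m) ℝ)
    (θhat : Fin p → ℝ)
    (L σlo RG Wlo Whi φ : ℝ)
    (hg : ContDiff ℝ 2 g)
    (hG : ∀ θ, HasFDerivAt g (toCLM (G θ)) θ)
    (hW : W.PosDef)
    (hWlo : 0 < Wlo) (hWmin : Wlo ≤ lamMin W) (hWmax : lamMax W ≤ Whi)
    (hfoc : (G θhat)ᵀ *ᵥ (W *ᵥ g θhat) = 0)
    (hL : 0 < L)
    (hLip : ∀ θ₁ θ₂, sigMax (G θ₁ - G θ₂) ≤ L * enorm' (θ₁ - θ₂))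
    (hσpos : 0 < σlo)
    (hσ : ∀ θ, enorm' (θ - θhat) ≤ RG → σlo ≤ sigMin (G θ))
    (hφ : φ = wnorm W (g θhat))
    (hmis : φ < σlo ^ 2 * Wlo / (L * Real.sqrt Whi)) :
    ∀ γ ∈ Set.Ioo (0 : ℝ) 1, ∃ γt, 0 < γt ∧ γt < γ ∧
      0 < ((γ - γt) / γ) * σlo * Real.sqrt (Wlo / Whi) / L - φ / (σlo * Real.sqrt Wlo) ∧
      ∀ θseq : ℕ → (Fin p → ℝ),
        enorm' (θseq 0 - θhat)
          ≤ min (((γ - γt) / γ) * σlo * Real.sqrt (Wlo / Whi) / L - φ / (σlo * Real.sqrt Wlo)) RG →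
        (∀ k, θseq (k + 1) = θseq k
          - γ • (((G (θseq k))ᵀ * W * G (θseq k))⁻¹ *ᵥ ((G (θseq k))ᵀ *ᵥ (W *ᵥ g (θseq k))))) →
        ∀ k, enorm' (θseq (k + 1) - θhat) ≤ (1 - γt) * enorm' (θseq k - θhat)
          ∧ enorm' (θseq (k + 1) - θhat)
            ≤ (1 - γt) ^ (k + 1) * enorm' (θseq 0 - θhat) := by
  subst hφ
  exact fun γ hγ => gauss_newton_local_convergence_misspecified_general (fun θ _ => hG θ)
    hW.posSemidef hWlo hWmin hWmax hfoc hL (fun θ₁ θ₂ _ _ => hLip θ₁ θ₂) hσpos hσ hmis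
    ⟨hγ.1, hγ.2.le⟩
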